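/- For a Cartesian reverse differential category X, the operation f ↦ f† := ι₁R[f], restricted to the subcategory Lin(X) of maps linear with respect to the induced differential combinator, is a contravariant involutive identity-on-objects functor making Lin(X) a dagger category with dagger biproducts (πᵢ† = ιᵢ). In particular, for linear f : A → B and linear g : B → C, (fg)† = g†f†, 1† = 1, and f†† = f. -/

import Mathlib

universe u v

/-- A Cartesian left additive category, with composition written in diagrammatic order:
`comp f g` is "`f` followed by `g`". -/
structure CLACat where
  Obj : Type u
  Hom : Obj → Obj → Type v
  id : ∀ A, Hom A A
  comp : ∀ {A B C}, Hom A B → Hom B C → Hom A C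
  id_comp : ∀ {A B} (f : Hom A B), comp (id A) f = f
  comp_id : ∀ {A B} (f : Hom A B), comp f (id B) = f
  assoc : ∀ {A B C D} (f : Hom A B) (g : Hom B C) (h : Hom C D),
    comp (comp f g) h = comp f (comp g h)
  /-- chosen binary product on objects -/
  prod : Obj → Obj → Obj
  /-- first projection -/
  p0 : ∀ {A B}, Hom (prod A B) A
  /-- second projection -/
  p1 : ∀ {A B}, Hom (prod A B) B
  /-- pairing -/
  pair : ∀ {C A B}, Hom C A → Hom C B → Hom C (prod A B)
  pair_p0 : ∀ {C A B} (f : Hom C A) (g : Hom C B), comp (pair f g) p0 = f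
  pair_p1 : ∀ {C A B} (f : Hom C A) (g : Hom C B), comp (pair f g) p1 = g
  pair_unique : ∀ {C A B} (h : Hom C (prod A B)), pair (comp h p0) (comp h p1) = h
  /-- chosen terminal object -/
  one : Obj
  bang : ∀ A, Hom A one
  bang_unique : ∀ {A} (f : Hom A one), f = bang A
  /-- commutative monoid structure on each hom-set -/
  add : ∀ {A B}, Hom A B → Hom A B → Hom A B
  zero : ∀ {A B}, Hom A B
  add_assoc' : ∀ {A B} (f g h : Hom A B), add (add f g) h = add f (add g h)
  add_comm' : ∀ {A B} (f g : Hom A B), add f g = add g f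
  add_zero' : ∀ {A B} (f : Hom A B), add f zero = f
  /-- composition on the left preserves addition -/
  comp_add : ∀ {A B C} (x : Hom A B) (f g : Hom B C),
    comp x (add f g) = add (comp x f) (comp x g)
  comp_zero : ∀ {A B C} (x : Hom A B), comp x (zero : Hom B C) = (zero : Hom A C)
  /-- projections are additive -/
  add_comp_p0 : ∀ {C A B} (f g : Hom C (prod A B)),
    comp (add f g) p0 = add (comp f p0) (comp g p0)
  zero_comp_p0 : ∀ {C A B}, comp (zero : Hom C (prod A B)) p0 = (zero : Hom C A)
  add_comp_p1 : ∀ {C A B} (f g : Hom C (prod A B)),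
    comp (add f g) p1 = add (comp f p1) (comp g p1)
  zero_comp_p1 : ∀ {C A B}, comp (zero : Hom C (prod A B)) p1 = (zero : Hom C B)

namespace CLACat

variable (X : CLACat)

/-- first injection ι₀ := ⟨1,0⟩ : A → A×B -/
def i0 {A B : X.Obj} : X.Hom A (X.prod A B) := X.pair (X.id A) X.zero

/-- second injection ι₁ := ⟨0,1⟩ : B → A×B -/
def i1 {A B : X.Obj} : X.Hom B (X.prod A B) := X.pair X.zero (X.id B)

/-- the product map h×k -/
def prodMap {A B C D : X.Obj} (h : X.Hom A B) (k : X.Hom C D) :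
    X.Hom (X.prod A C) (X.prod B D) :=
  X.pair (X.comp X.p0 h) (X.comp X.p1 k)

/-- the exchange isomorphism ex := ⟨π₀×π₀, π₁×π₁⟩ -/
def ex {A B C D : X.Obj} :
    X.Hom (X.prod (X.prod A B) (X.prod C D)) (X.prod (X.prod A C) (X.prod B D)) :=
  X.pair (X.prodMap X.p0 X.p0) (X.prodMap X.p1 X.p1)

/-- a map is additive when precomposition with it preserves the additive structure -/
def Additive {A B : X.Obj} (h : X.Hom A B) : Prop :=
  (∀ {C : X.Obj} (x y : X.Hom C A), X.comp (X.add x y) h = X.add (X.comp x h) (X.comp y h)) ∧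
  (∀ {C : X.Obj}, X.comp (X.zero : X.Hom C A) h = X.zero)

end CLACat
/-- The axioms of a Cartesian differential category, for a differential combinator `D`
on a Cartesian left additive category `X`. -/
structure CDCAxioms (X : CLACat)
    (D : ∀ {A B : X.Obj}, X.Hom A B → X.Hom (X.prod A A) B) : Prop where
  cdc1_add : ∀ {A B} (f g : X.Hom A B), D (X.add f g) = X.add (D f) (D g)
  cdc1_zero : ∀ {A B}, D (X.zero : X.Hom A B) = X.zero
  cdc2_add : ∀ {C A B} (a b c : X.Hom C A) (f : X.Hom A B),
    X.comp (X.pair a (X.add b c)) (D f)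
      = X.add (X.comp (X.pair a b) (D f)) (X.comp (X.pair a c) (D f))
  cdc2_zero : ∀ {C A B} (a : X.Hom C A) (f : X.Hom A B),
    X.comp (X.pair a X.zero) (D f) = X.zero
  cdc3_id : ∀ {A}, D (X.id A) = X.p1
  cdc3_p0 : ∀ {A B}, D (X.p0 : X.Hom (X.prod A B) A) = X.comp X.p1 X.p0
  cdc3_p1 : ∀ {A B}, D (X.p1 : X.Hom (X.prod A B) B) = X.comp X.p1 X.p1
  cdc4 : ∀ {A B C} (f : X.Hom A B) (g : X.Hom A C),
    D (X.pair f g) = X.pair (D f) (D g)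
  cdc5 : ∀ {A B C} (f : X.Hom A B) (g : X.Hom B C),
    D (X.comp f g) = X.comp (X.pair (X.comp X.p0 f) (D f)) (D g)
  cdc6 : ∀ {C A B} (a b c : X.Hom C A) (f : X.Hom A B),
    X.comp (X.pair (X.pair a b) (X.pair X.zero c)) (D (D f)) = X.comp (X.pair a c) (D f)
  cdc7 : ∀ {C A B} (a b c d : X.Hom C A) (f : X.Hom A B),
    X.comp (X.pair (X.pair a b) (X.pair c d)) (D (D f))
      = X.comp (X.pair (X.pair a c) (X.pair b d)) (D (D f))

namespace CLACat

/-- The forward differential combinator induced by a reverse differential combinator: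
`D[f] := (⟨1,0⟩ × 1) R[R[f]] π₁`. -/
def Dof (X : CLACat) (R : ∀ {A B : X.Obj}, X.Hom A B → X.Hom (X.prod A B) A)
    {A B : X.Obj} (f : X.Hom A B) : X.Hom (X.prod A A) B :=
  X.comp (X.prodMap X.i0 (X.id A)) (X.comp (R (R f)) X.p1)

/-- The dagger induced by a reverse differential combinator: `f† := ι₁ R[f]`. -/
def dag (X : CLACat) (R : ∀ {A B : X.Obj}, X.Hom A B → X.Hom (X.prod A B) A)
    {A B : X.Obj} (f : X.Hom A B) : X.Hom B A :=
  X.comp X.i1 (R f)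

end CLACat

/-- The axioms of a Cartesian reverse differential category, for a reverse differential
combinator `R` on a Cartesian left additive category `X`. -/
structure RDCAxioms (X : CLACat)
    (R : ∀ {A B : X.Obj}, X.Hom A B → X.Hom (X.prod A B) A) : Prop where
  rd1_add : ∀ {A B} (f g : X.Hom A B), R (X.add f g) = X.add (R f) (R g)
  rd1_zero : ∀ {A B}, R (X.zero : X.Hom A B) = X.zero
  rd2_add : ∀ {C A B} (a : X.Hom C A) (b c : X.Hom C B) (f : X.Hom A B),
    X.comp (X.pair a (X.add b c)) (R f)
      = X.add (X.comp (X.pair a b) (R f)) (X.comp (X.pair a c) (R f))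
  rd2_zero : ∀ {C A B} (a : X.Hom C A) (f : X.Hom A B),
    X.comp (X.pair a X.zero) (R f) = X.zero
  rd3_id : ∀ {A}, R (X.id A) = X.p1
  rd3_p0 : ∀ {A B}, R (X.p0 : X.Hom (X.prod A B) A) = X.comp X.p1 X.i0
  rd3_p1 : ∀ {A B}, R (X.p1 : X.Hom (X.prod A B) B) = X.comp X.p1 X.i1
  rd4 : ∀ {A B C} (f : X.Hom A B) (g : X.Hom A C),
    R (X.pair f g) = X.add (X.comp (X.prodMap (X.id A) X.p0) (R f))
                           (X.comp (X.prodMap (X.id A) X.p1) (R g))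
  rd4_bang : ∀ {A}, R (X.bang A) = X.zero
  rd5 : ∀ {A B C} (f : X.Hom A B) (g : X.Hom B C),
    R (X.comp f g) = X.comp (X.pair X.p0 (X.pair (X.comp X.p0 f) X.p1))
                            (X.comp (X.prodMap (X.id A) (R g)) (R f))
  rd6 : ∀ {A B} (f : X.Hom A B),
    X.comp (X.pair (X.prodMap (X.id A) X.p0) (X.prodMap (X.zero : X.Hom A A) X.p1))
      (X.comp (X.prodMap (X.i0 : X.Hom (X.prod A B) (X.prod (X.prod A B) A)) (X.id (X.prod A B)))
        (X.comp (R (R (R f))) X.p1))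
    = X.comp (X.prodMap (X.id A) X.p1) (R f)
  rd7 : ∀ {A B} (f : X.Hom A B),
    X.Dof (fun {_ _} g => R g) (X.Dof (fun {_ _} g => R g) f)
      = X.comp X.ex (X.Dof (fun {_ _} g => R g) (X.Dof (fun {_ _} g => R g) f))

namespace CLACat
/-- a map is linear with respect to the induced differential combinator -/
def RLinear (X : CLACat) (R : ∀ {A B : X.Obj}, X.Hom A B → X.Hom (X.prod A B) A)
    {A B : X.Obj} (f : X.Hom A B) : Prop :=
  X.Dof (fun {_ _} g => R g) f = X.comp X.p1 f
end CLACat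

/-! Linearity is transported through the forward combinator `D`. By the chain rule for `D` and
[RD.6], every dagger `f† = ι₁ R[f]` is linear. Also by [RD.6], `R[f]` is recovered from `R[D[f]]`;
for linear `f` the latter is `R[π₁ f]`, so `R[f]` does not depend on the base point, that is,
`R[f] = π₁ f†`. Reverse differentiating this identity once more gives `π₁ f = D[f] = π₁ f††`, and
for linear `g` the reverse chain rule `(f g)† = ⟨0 f, 1⟩ R[g] f†` reduces to `(f g)† = g† f†`.
-/

section

local infix:80 "≫" => CLACat.comp _

namespace CLACat

section Pairing

variable (X : CLACat)

theorem zero_add {A B : X.Obj} (f : X.Hom A B) : X.add X.zero f = f := by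
  rw [X.add_comm', X.add_zero']

theorem comp_pair {E C A B : X.Obj} (h : X.Hom E C) (f : X.Hom C A) (g : X.Hom C B) :
    h ≫ X.pair f g = X.pair (h ≫ f) (h ≫ g) := by
  rw [← X.pair_unique (h ≫ X.pair f g), X.assoc, X.assoc, X.pair_p0, X.pair_p1]

theorem add_pair {C A B : X.Obj} (a c : X.Hom C A) (b d : X.Hom C B) :
    X.add (X.pair a b) (X.pair c d) = X.pair (X.add a c) (X.add b d) := by
  rw [← X.pair_unique (X.add (X.pair a b) (X.pair c d))]
  simp only [X.add_comp_p0, X.add_comp_p1, X.pair_p0, X.pair_p1]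

theorem pair_p0_p1 {A B : X.Obj} : X.pair X.p0 X.p1 = X.id (X.prod A B) := by
  simpa only [X.id_comp] using X.pair_unique (X.id (X.prod A B))

theorem pair_comp_prodMap {E A B C D : X.Obj} (a : X.Hom E A) (c : X.Hom E C)
    (h : X.Hom A B) (k : X.Hom C D) :
    X.pair a c ≫ X.prodMap h k = X.pair (a ≫ h) (c ≫ k) := by
  simp only [prodMap, X.comp_pair, ← X.assoc, X.pair_p0, X.pair_p1]

theorem comp_i0 {E A B : X.Obj} (a : X.Hom E A) :
    a ≫ (X.i0 : X.Hom A (X.prod A B)) = X.pair a X.zero := by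
  rw [i0, X.comp_pair, X.comp_id, X.comp_zero]

theorem comp_i1 {E A B : X.Obj} (b : X.Hom E B) :
    b ≫ (X.i1 : X.Hom B (X.prod A B)) = X.pair X.zero b := by
  rw [i1, X.comp_pair, X.comp_id, X.comp_zero]

end Pairing

section Combinator

variable {X : CLACat} (R : ∀ {A B : X.Obj}, X.Hom A B → X.Hom (X.prod A B) A)

theorem pair_comp_Dof {E A B : X.Obj} (f : X.Hom A B) (a v : X.Hom E A) :
    X.pair a v ≫ X.Dof @R f = (X.pair (X.pair a X.zero) v ≫ R (R f)) ≫ X.p1 := by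
  rw [Dof, ← X.assoc, X.pair_comp_prodMap, X.comp_i0, X.comp_id, X.assoc]

theorem rLinear_iff {A B : X.Obj} (f : X.Hom A B) :
    X.RLinear @R f ↔
      ∀ {E : X.Obj} (a v : X.Hom E A), X.pair a v ≫ X.Dof @R f = v ≫ f := by
  constructor
  · intro hf E a v
    have hDf : X.Dof @R f = X.p1 ≫ f := hf
    rw [hDf, ← X.assoc, X.pair_p1]
  · intro h
    have hDf := h X.p0 X.p1
    rwa [X.pair_p0_p1, X.id_comp] at hDf

theorem comp_dag {E A B : X.Obj} (f : X.Hom A B) (b : X.Hom E B) :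
    b ≫ X.dag @R f = X.pair X.zero b ≫ R f := by
  rw [dag, ← X.assoc, X.comp_i1]

end Combinator

end CLACat

namespace RDCAxioms

open CLACat

variable {X : CLACat} {R : ∀ {A B : X.Obj}, X.Hom A B → X.Hom (X.prod A B) A}

theorem pair_comp_R_p0 (hR : RDCAxioms X @R) {E A B : X.Obj}
    (a : X.Hom E (X.prod A B)) (b : X.Hom E A) :
    X.pair a b ≫ R X.p0 = X.pair b X.zero := by
  rw [hR.rd3_p0, ← X.assoc, X.pair_p1, X.comp_i0]

theorem pair_comp_R_p1 (hR : RDCAxioms X @R) {E A B : X.Obj}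
    (a : X.Hom E (X.prod A B)) (b : X.Hom E B) :
    X.pair a b ≫ R X.p1 = X.pair X.zero b := by
  rw [hR.rd3_p1, ← X.assoc, X.pair_p1, X.comp_i1]

theorem pair_comp_R_pair (hR : RDCAxioms X @R) {E A B C : X.Obj}
    (f : X.Hom A B) (g : X.Hom A C) (a : X.Hom E A) (b : X.Hom E (X.prod B C)) :
    X.pair a b ≫ R (X.pair f g) =
      X.add (X.pair a (b ≫ X.p0) ≫ R f) (X.pair a (b ≫ X.p1) ≫ R g) := by
  simp only [hR.rd4, X.comp_add, ← X.assoc, X.pair_comp_prodMap, X.comp_id]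

theorem R_comp (hR : RDCAxioms X @R) {A B C : X.Obj} (f : X.Hom A B) (g : X.Hom B C) :
    R (f ≫ g) = X.pair X.p0 (X.pair (X.p0 ≫ f) X.p1 ≫ R g) ≫ R f := by
  rw [hR.rd5, ← X.assoc, X.pair_comp_prodMap, X.comp_id]

theorem pair_comp_R_comp (hR : RDCAxioms X @R) {E A B C : X.Obj}
    (f : X.Hom A B) (g : X.Hom B C) (a : X.Hom E A) (c : X.Hom E C) :
    X.pair a c ≫ R (f ≫ g) = X.pair a (X.pair (a ≫ f) c ≫ R g) ≫ R f := by
  simp only [hR.R_comp, ← X.assoc, X.comp_pair, X.pair_p0, X.pair_p1]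

theorem pair_comp_R_prodMap (hR : RDCAxioms X @R) {E A B C D : X.Obj}
    (h : X.Hom A B) (k : X.Hom C D) (a : X.Hom E A) (c : X.Hom E C) (w : X.Hom E (X.prod B D)) :
    X.pair (X.pair a c) w ≫ R (X.prodMap h k) =
      X.pair (X.pair a (w ≫ X.p0) ≫ R h) (X.pair c (w ≫ X.p1) ≫ R k) := by
  simp only [prodMap, hR.pair_comp_R_pair, hR.pair_comp_R_comp, hR.pair_comp_R_p0,
    hR.pair_comp_R_p1, X.pair_p0, X.pair_p1, X.add_pair, X.add_zero', X.zero_add]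

theorem R_i1 (hR : RDCAxioms X @R) {A B : X.Obj} :
    R (X.i1 : X.Hom B (X.prod A B)) = X.p1 ≫ X.p1 := by
  rw [i1, hR.rd4, hR.rd1_zero, hR.rd3_id, X.comp_zero, X.zero_add, prodMap, X.pair_p1]

theorem pair_comp_Dof_comp (hR : RDCAxioms X @R) {E A B C : X.Obj}
    (f : X.Hom A B) (g : X.Hom B C) (a v : X.Hom E A) :
    X.pair a v ≫ X.Dof @R (f ≫ g) =
      X.pair (a ≫ f) (X.pair a v ≫ X.Dof @R f) ≫ X.Dof @R g := by
  have base_fixed : X.pair a X.zero ≫ X.pair X.p0 (X.pair (X.p0 ≫ f) X.p1 ≫ R g) =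
      X.pair a X.zero := by
    simp only [X.comp_pair, ← X.assoc, X.pair_p0, X.pair_p1, hR.rd2_zero]
  have R_argument_p1 (u : X.Hom E (X.prod B C)) :
      (X.pair (X.pair a X.zero) u ≫ R (X.pair (X.p0 ≫ f) X.p1)) ≫ X.p1 = u ≫ X.p1 := by
    simp only [hR.pair_comp_R_pair, hR.pair_comp_R_comp, hR.pair_comp_R_p0, hR.pair_comp_R_p1,
      X.add_comp_p1, X.pair_p1, X.zero_add]
  have R_base_p1 (w : X.Hom E (X.prod A B)) :
      (X.pair (X.pair a X.zero) w ≫ R (X.pair X.p0 (X.pair (X.p0 ≫ f) X.p1 ≫ R g))) ≫ X.p1 =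
        X.pair (a ≫ f) (w ≫ X.p1) ≫ X.Dof @R g := by
    rw [hR.pair_comp_R_pair, X.add_comp_p1, hR.pair_comp_R_p0, X.pair_p1, X.zero_add,
      hR.pair_comp_R_comp, R_argument_p1, X.comp_pair, ← X.assoc, X.pair_p0, X.pair_p1,
      ← pair_comp_Dof]
  rw [pair_comp_Dof, hR.R_comp f g, hR.pair_comp_R_comp, base_fixed, R_base_p1, ← pair_comp_Dof]

theorem rLinear_i1 (hR : RDCAxioms X @R) {A B : X.Obj} :
    X.RLinear @R (X.i1 : X.Hom B (X.prod A B)) := by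
  rw [rLinear_iff]
  intro E a v
  rw [pair_comp_Dof, hR.R_i1, hR.pair_comp_R_comp, hR.pair_comp_R_p1, hR.pair_comp_R_p1,
    X.pair_p1, X.comp_i1]

theorem pair_comp_Dof_R (hR : RDCAxioms X @R) {E A B : X.Obj} (f : X.Hom A B)
    (a : X.Hom E A) (b w : X.Hom E B) :
    X.pair (X.pair a b) (X.pair X.zero w) ≫ X.Dof @R (R f) = X.pair a w ≫ R f := by
  have h := congrArg (X.pair a (X.pair b w) ≫ ·) (hR.rd6 f)
  simpa only [X.comp_pair, X.pair_comp_prodMap, X.comp_i0, pair_comp_Dof, ← X.assoc, X.pair_p0,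
    X.pair_p1, X.comp_id, X.comp_zero] using h

theorem pair_comp_R_Dof_p1 (hR : RDCAxioms X @R) {E A B : X.Obj} (f : X.Hom A B)
    (a : X.Hom E A) (b : X.Hom E B) :
    (X.pair (X.pair a X.zero) b ≫ R (X.Dof @R f)) ≫ X.p1 = X.pair a b ≫ R f := by
  rw [Dof, hR.pair_comp_R_comp, hR.pair_comp_R_comp, hR.pair_comp_R_p1, X.pair_comp_prodMap,
    X.comp_i0, X.comp_id, hR.pair_comp_R_prodMap, hR.rd3_id, X.pair_p1, X.pair_p1,
    ← pair_comp_Dof, hR.pair_comp_Dof_R]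

theorem rLinear_dag (hR : RDCAxioms X @R) {A B : X.Obj} (f : X.Hom A B) :
    X.RLinear @R (X.dag @R f) := by
  rw [rLinear_iff]
  intro E b w
  calc X.pair b w ≫ X.Dof @R (X.dag @R f)
      = X.pair (b ≫ X.i1) (X.pair b w ≫ X.Dof @R X.i1) ≫ X.Dof @R (R f) :=
        hR.pair_comp_Dof_comp X.i1 (R f) b w
    _ = X.pair (X.pair X.zero b) (X.pair X.zero w) ≫ X.Dof @R (R f) := by
        rw [(rLinear_iff @R X.i1).mp hR.rLinear_i1, X.comp_i1, X.comp_i1]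
    _ = X.pair X.zero w ≫ R f := hR.pair_comp_Dof_R f X.zero b w
    _ = w ≫ X.dag @R f := (comp_dag @R f w).symm

theorem pair_comp_R_of_rLinear (hR : RDCAxioms X @R) {E A B : X.Obj} {f : X.Hom A B}
    (hf : X.RLinear @R f) (a : X.Hom E A) (b : X.Hom E B) :
    X.pair a b ≫ R f = b ≫ X.dag @R f := by
  have hDf : X.Dof @R f = X.p1 ≫ f := hf
  rw [← hR.pair_comp_R_Dof_p1, hDf, hR.pair_comp_R_comp, hR.pair_comp_R_p1, X.pair_p1,
    X.pair_p1, comp_dag]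

theorem R_eq_p1_comp_dag_of_rLinear (hR : RDCAxioms X @R) {A B : X.Obj} {f : X.Hom A B}
    (hf : X.RLinear @R f) : R f = X.p1 ≫ X.dag @R f := by
  rw [← hR.pair_comp_R_of_rLinear hf X.p0 X.p1, X.pair_p0_p1, X.id_comp]

theorem dag_dag_of_rLinear (hR : RDCAxioms X @R) {A B : X.Obj} {f : X.Hom A B}
    (hf : X.RLinear @R f) : X.dag @R (X.dag @R f) = f := by
  have hRf := hR.R_eq_p1_comp_dag_of_rLinear hf
  calc X.dag @R (X.dag @R f)
      = X.pair X.zero (X.id A) ≫ R (X.dag @R f) := by rw [← comp_dag, X.id_comp]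
    _ = (X.pair (X.pair X.zero X.zero) (X.id A) ≫
          R ((X.p1 : X.Hom (X.prod A B) B) ≫ X.dag @R f)) ≫ X.p1 := by
        rw [hR.pair_comp_R_comp, hR.pair_comp_R_p1, X.pair_p1, X.pair_p1]
    _ = X.pair X.zero (X.id A) ≫ X.Dof @R f := by rw [← hRf, pair_comp_Dof]
    _ = f := by rw [(rLinear_iff @R f).mp hf, X.id_comp]

theorem dag_dag_eq_iff (hR : RDCAxioms X @R) {A B : X.Obj} (f : X.Hom A B) :
    X.dag @R (X.dag @R f) = f ↔ X.RLinear @R f :=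
  ⟨fun h => h ▸ hR.rLinear_dag (X.dag @R f), hR.dag_dag_of_rLinear⟩

theorem dag_comp (hR : RDCAxioms X @R) {A B C : X.Obj} (f : X.Hom A B) (g : X.Hom B C) :
    X.dag @R (f ≫ g) = (X.pair (X.zero ≫ f) (X.id C) ≫ R g) ≫ X.dag @R f := by
  rw [dag, i1, hR.pair_comp_R_comp, comp_dag]

theorem dag_comp_of_rLinear (hR : RDCAxioms X @R) {A B C : X.Obj} (f : X.Hom A B)
    {g : X.Hom B C} (hg : X.RLinear @R g) :
    X.dag @R (f ≫ g) = X.dag @R g ≫ X.dag @R f := by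
  rw [hR.dag_comp, hR.pair_comp_R_of_rLinear hg, X.id_comp]

theorem dag_id (hR : RDCAxioms X @R) {A : X.Obj} : X.dag @R (X.id A) = X.id A := by
  rw [dag, i1, hR.rd3_id, X.pair_p1]

theorem dag_p0 (hR : RDCAxioms X @R) {A B : X.Obj} :
    X.dag @R (X.p0 : X.Hom (X.prod A B) A) = X.i0 := by
  rw [dag, i1, hR.pair_comp_R_p0, i0]

theorem dag_p1 (hR : RDCAxioms X @R) {A B : X.Obj} :
    X.dag @R (X.p1 : X.Hom (X.prod A B) B) = X.i1 := by
  rw [dag, i1, hR.pair_comp_R_p1, i1]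

end RDCAxioms

end

theorem lin_dagger_category_general (X : CLACat)
    (R : ∀ {A B : X.Obj}, X.Hom A B → X.Hom (X.prod A B) A) (hR : RDCAxioms X @R) :
    (∀ {A B : X.Obj} (f : X.Hom A B), X.RLinear @R (X.dag @R f)) ∧
    (∀ {A : X.Obj}, X.dag @R (X.id A) = X.id A) ∧
    (∀ {A B C : X.Obj} (f : X.Hom A B) (g : X.Hom B C), X.RLinear @R g →
      X.dag @R (X.comp f g) = X.comp (X.dag @R g) (X.dag @R f)) ∧
    (∀ {A B : X.Obj} (f : X.Hom A B), X.dag @R (X.dag @R f) = f ↔ X.RLinear @R f) ∧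
    (∀ {A B : X.Obj}, X.dag @R (X.p0 : X.Hom (X.prod A B) A) = X.i0) ∧
    (∀ {A B : X.Obj}, X.dag @R (X.p1 : X.Hom (X.prod A B) B) = X.i1) :=
  ⟨hR.rLinear_dag, hR.dag_id, fun f _ hg => hR.dag_comp_of_rLinear f hg, hR.dag_dag_eq_iff,
    hR.dag_p0, hR.dag_p1⟩

/-- for a Cartesian reverse differential category `X`, the operation
`f ↦ f† := ι₁ R[f]` restricted to the subcategory `Lin(X)` of linear maps is a
contravariant involutive identity-on-objects functor, making `Lin(X)` a dagger category
with dagger biproducts (`πᵢ† = ιᵢ`).  In particular, for linear `f : A → B` and linear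
`g : B → C`, `(fg)† = g† f†`, `1† = 1` and `f†† = f`. -/
theorem lin_dagger_category (X : CLACat)
    (R : ∀ {A B : X.Obj}, X.Hom A B → X.Hom (X.prod A B) A)
    (hR : RDCAxioms X (fun {_ _} f => R f)) :
    -- dagger is well defined on Lin(X)
    (∀ {A B : X.Obj} (f : X.Hom A B), X.RLinear (fun {_ _} g => R g) f →
      X.RLinear (fun {_ _} g => R g) (X.dag (fun {_ _} g => R g) f)) ∧
    -- contravariant functor
    (∀ {A : X.Obj}, X.dag (fun {_ _} g => R g) (X.id A) = X.id A) ∧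
    (∀ {A B C : X.Obj} (f : X.Hom A B) (g : X.Hom B C),
      X.RLinear (fun {_ _} g => R g) f → X.RLinear (fun {_ _} g => R g) g →
        X.dag (fun {_ _} g => R g) (X.comp f g)
          = X.comp (X.dag (fun {_ _} g => R g) g) (X.dag (fun {_ _} g => R g) f)) ∧
    -- involutive on linear maps
    (∀ {A B : X.Obj} (f : X.Hom A B), X.RLinear (fun {_ _} g => R g) f →
      X.dag (fun {_ _} g => R g) (X.dag (fun {_ _} g => R g) f) = f) ∧
    -- dagger biproducts: πᵢ† = ιᵢ
    (∀ {A B : X.Obj}, X.dag (fun {_ _} g => R g) (X.p0 : X.Hom (X.prod A B) A) = X.i0) ∧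
    (∀ {A B : X.Obj}, X.dag (fun {_ _} g => R g) (X.p1 : X.Hom (X.prod A B) B) = X.i1) := by
  obtain ⟨rLinear_dag, dag_id, dag_comp, dag_dag, dag_p⟩ := lin_dagger_category_general X @R hR
  exact ⟨fun f _ => rLinear_dag f, dag_id, fun f g _ => dag_comp f g,
    fun f => (dag_dag f).mpr, dag_p⟩
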